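/- arXiv:1111.6138 — 4 statements merged into one kernel-verified Lean document; each statement's English description precedes it below -/
import Mathlib

section
/- For every integer n ≥ 1 and every integer l with 0 ≤ l ≤ ⌊n/2⌋, the coefficient of X^{n-2l} in the n-th Chebyshev polynomial of the first kind T_n (over ℝ) equals (-1)^l · (n / (2(n-l))) · C(n-l, l) · 2^{n-2l}. -/
open Polynomial

/-!
Over any commutative ring, the recurrence `U (n + 2) = 2 X U (n + 1) - U n` turns into Pascal's rule
for the coefficients of `U`, so that the coefficient of `X ^ k` in `U (k + 2 l)` is
`(-1) ^ l * (k + l).choose l * 2 ^ k`. The coefficients of `T` follow from `T n = U n - X U (n - 1)`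
and the absorption identity `(k + 1 + l) * (k + l).choose l = (k + 1) * (k + 1 + l).choose l`.
-/

section CommRing

variable (R : Type*) [CommRing R]

lemma chebyshevU_coeff_self (n : ℕ) : (Chebyshev.U R n).coeff n = 2 ^ n := by
  -- `leadingCoeff_U_natCast` needs a domain with `2 ≠ 0`, so the coefficient is read off over `ℤ`.
  have coeff_int : (Chebyshev.U ℤ n).coeff n = 2 ^ n := by
    rw [← Chebyshev.leadingCoeff_U_natCast ℤ n, leadingCoeff, Chebyshev.natDegree_U_natCast]
  rw [← Chebyshev.map_U (Int.castRingHom R), coeff_map, coeff_int]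
  simp

lemma chebyshevU_coeff_zero_two_mul (l : ℕ) :
    (Chebyshev.U R (2 * l : ℕ)).coeff 0 = (-1) ^ l := by
  rw [coeff_zero_eq_eval_zero, Nat.cast_mul, Nat.cast_ofNat, Chebyshev.U_eval_two_mul_zero]
  simp

lemma chebyshevT_coeff_zero_two_mul (l : ℕ) :
    (Chebyshev.T R (2 * l : ℕ)).coeff 0 = (-1) ^ l := by
  rw [coeff_zero_eq_eval_zero, Nat.cast_mul, Nat.cast_ofNat, Chebyshev.T_eval_two_mul_zero]
  simp

lemma chebyshevU_coeff_succ_add_two (n : ℤ) (k : ℕ) :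
    (Chebyshev.U R (n + 2)).coeff (k + 1) =
      2 * (Chebyshev.U R (n + 1)).coeff k - (Chebyshev.U R n).coeff (k + 1) := by
  rw [Chebyshev.U_add_two, mul_assoc, coeff_sub, coeff_ofNat_mul, coeff_X_mul]

lemma chebyshevT_coeff_succ_add_one (n : ℤ) (k : ℕ) :
    (Chebyshev.T R (n + 1)).coeff (k + 1) =
      (Chebyshev.U R (n + 1)).coeff (k + 1) - (Chebyshev.U R n).coeff k := by
  rw [Chebyshev.T_eq_U_sub_X_mul_U, add_sub_cancel_right, coeff_sub, coeff_X_mul]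

lemma chebyshevU_coeff_add_two_mul (k l : ℕ) :
    (Chebyshev.U R (k + 2 * l : ℕ)).coeff k = (-1) ^ l * (k + l).choose l * 2 ^ k := by
  induction l generalizing k with
  | zero => simpa using chebyshevU_coeff_self R k
  | succ l ih_l =>
    induction k with
    | zero => simpa using chebyshevU_coeff_zero_two_mul R (l + 1)
    | succ k ih_k =>
      have pascal : ((k + 1 + (l + 1)).choose (l + 1) : R) =
          (k + 1 + l).choose l + (k + (l + 1)).choose (l + 1) := by
        rw [← add_assoc, Nat.choose_succ_succ, Nat.cast_add, add_right_comm k 1 l, add_assoc k l 1]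
      calc (Chebyshev.U R (k + 1 + 2 * (l + 1) : ℕ)).coeff (k + 1)
        _ = 2 * (Chebyshev.U R (k + 2 * (l + 1) : ℕ)).coeff k -
            (Chebyshev.U R (k + 1 + 2 * l : ℕ)).coeff (k + 1) := by
          rw [show k + 1 + 2 * (l + 1) = k + 1 + 2 * l + 2 by ring,
            show k + 2 * (l + 1) = k + 1 + 2 * l + 1 by ring]
          exact chebyshevU_coeff_succ_add_two R (k + 1 + 2 * l : ℕ) k
        _ = 2 * ((-1) ^ (l + 1) * (k + (l + 1)).choose (l + 1) * 2 ^ k) -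
            (-1) ^ l * (k + 1 + l).choose l * 2 ^ (k + 1) := by rw [ih_k, ih_l]
        _ = (-1) ^ (l + 1) * (k + 1 + (l + 1)).choose (l + 1) * 2 ^ (k + 1) := by
          rw [pascal]; ring

lemma two_mul_add_mul_chebyshevT_coeff_add_two_mul (k l : ℕ) :
    2 * (k + l : R) * (Chebyshev.T R (k + 2 * l : ℕ)).coeff k =
      (-1) ^ l * (k + 2 * l) * (k + l).choose l * 2 ^ k := by
  cases k with
  | zero =>
    rw [zero_add, chebyshevT_coeff_zero_two_mul, zero_add, Nat.choose_self]
    push_cast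
    ring
  | succ k =>
    have coeff_eq : (Chebyshev.T R (k + 1 + 2 * l : ℕ)).coeff (k + 1) =
        (-1) ^ l * (k + 1 + l).choose l * 2 ^ (k + 1) - (-1) ^ l * (k + l).choose l * 2 ^ k := by
      rw [← chebyshevU_coeff_add_two_mul, ← chebyshevU_coeff_add_two_mul, add_right_comm k 1,
        Nat.cast_succ, chebyshevT_coeff_succ_add_one]
    have absorption : ((k + l).choose l : R) * (k + 1 + l) = (k + 1 + l).choose l * (k + 1) := by
      have := Nat.choose_mul_succ_eq (k + l) l
      rw [add_right_comm, Nat.add_sub_cancel] at this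
      exact_mod_cast congrArg (Nat.cast (R := R)) this
    rw [coeff_eq, Nat.cast_succ]
    linear_combination (-2 * (-1) ^ l * 2 ^ k) * absorption

end CommRing

theorem chebyshevT_coeff_general {K : Type*} [Field K] (n l : ℕ) (hl : l ≤ n / 2)
    (h_denom : 2 * ((n : K) - l) ≠ 0) :
    (Chebyshev.T K n).coeff (n - 2 * l) =
      (-1) ^ l * (n / (2 * (n - l))) * ((n - l).choose l) * 2 ^ (n - 2 * l) := by
  obtain ⟨k, rfl⟩ : ∃ k, n = k + 2 * l := ⟨n - 2 * l, by lia⟩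
  have cleared := two_mul_add_mul_chebyshevT_coeff_add_two_mul K k l
  have sub_eq : ((k + 2 * l : ℕ) : K) - l = k + l := by push_cast; ring
  rw [sub_eq] at h_denom ⊢
  rw [Nat.add_sub_cancel, show k + 2 * l - l = k + l by lia,
    eq_div_of_mul_eq h_denom ((mul_comm _ _).trans cleared)]
  push_cast
  ring

theorem chebyshevT_coeff (n : ℕ) (hn : 1 ≤ n) (l : ℕ) (hl : l ≤ n / 2) :
    (Polynomial.Chebyshev.T ℝ n).coeff (n - 2 * l)
      = (-1 : ℝ) ^ l * ((n : ℝ) / (2 * ((n : ℝ) - l))) * ((n - l).choose l) *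
          2 ^ (n - 2 * l) := by
  have hln : (l : ℝ) < n := by exact_mod_cast (show l < n by lia)
  exact chebyshevT_coeff_general n l hl (mul_ne_zero two_ne_zero (sub_pos.mpr hln).ne')
end

section
/- For every integer n ≥ 1, Σ_{l=0}^{⌊n/2⌋} (-1)^l · (n / (2(n-l))) · C(n-l, l) · 2^{n-2l} = 1. -/
open Finset

/-!
The sum is the explicit formula for the Chebyshev polynomial `T n`, evaluated at `1`. By Pascal's
rule, `∑ (-1) ^ l * (n - l).choose l * (2 * X) ^ (n - 2 * l)` satisfies the recurrence of `U n`. The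
formula for `T n` then follows termwise from `T n = U n - X * U (n - 1)`, and `T n` takes the value
`1` at `1`.
-/

open Polynomial Polynomial.Chebyshev

lemma choose_sub_mul_pow_succ {R : Type*} [Semiring R] (n l : ℕ) (y : R) :
    ((n - l).choose l : R) * y ^ (n + 1 - 2 * l) = (n - l).choose l * y ^ (n - 2 * l) * y := by
  obtain h | h := le_or_gt (2 * l) n
  · rw [Nat.sub_add_comm h, pow_succ, mul_assoc]
  · simp [Nat.choose_eq_zero_of_lt (show n - l < l by omega)]

lemma choose_succ_sub_succ (n l : ℕ) :
    (n + 1 - l).choose (l + 1) = (n - l).choose l + (n - l).choose (l + 1) := by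
  obtain h | h := le_or_gt l n
  · rw [Nat.sub_add_comm h, Nat.choose_succ_succ']
  · obtain ⟨k, rfl⟩ := Nat.exists_eq_add_of_lt h
    simp [show n + 1 - (n + k + 1) = 0 by omega, show n - (n + k + 1) = 0 by omega]

lemma neg_one_pow_mul_choose_mul_pow_rec {R : Type*} [CommRing R] (n l : ℕ) (y : R) :
    (-1) ^ (l + 1) * ((n + 2 - (l + 1)).choose (l + 1) * y ^ (n + 2 - 2 * (l + 1))) =
      y * ((-1) ^ (l + 1) * ((n + 1 - (l + 1)).choose (l + 1) * y ^ (n + 1 - 2 * (l + 1)))) -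
        (-1) ^ l * ((n - l).choose l * y ^ (n - 2 * l)) := by
  have pascal := congrArg (Nat.cast : ℕ → R) (choose_succ_sub_succ n l)
  have shift := choose_sub_mul_pow_succ (n + 1) (l + 1) y
  rw [show n + 1 + 1 - 2 * (l + 1) = n - 2 * l by omega, Nat.add_sub_add_right] at shift
  rw [show n + 2 - (l + 1) = n + 1 - l by omega, show n + 2 - 2 * (l + 1) = n - 2 * l by omega,
    Nat.add_sub_add_right, pascal]
  push_cast
  linear_combination (-1) ^ (l + 1) * shift

-- The terms with `n < 2 * l` vanish. Leaving the length `N` free lets the induction compare the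
-- sums for `n`, `n + 1` and `n + 2`, whose nonzero parts have different lengths.
theorem chebyshev_U_eq_sum (R : Type*) [CommRing R] (n : ℕ) {N : ℕ} (hN : n < 2 * N) :
    U R n = ∑ l ∈ range N, (-1) ^ l * ((n - l).choose l * (2 * X) ^ (n - 2 * l)) := by
  induction n using Nat.twoStepInduction generalizing N with
  | zero =>
    obtain ⟨M, rfl⟩ := Nat.exists_eq_add_one.2 (show 0 < N by omega)
    simp [sum_range_succ']
  | one =>
    obtain ⟨M, rfl⟩ := Nat.exists_eq_add_one.2 (show 0 < N by omega)
    simp [sum_range_succ']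
  | more n ih_n ih_succ =>
    obtain ⟨M, rfl⟩ := Nat.exists_eq_add_one.2 (show 0 < N by omega)
    have U_rec : U R (n + 2 : ℕ) = 2 * X * U R (n + 1 : ℕ) - U R n := mod_cast U_add_two R n
    rw [U_rec, ih_n (N := M) (by omega), ih_succ (N := M + 1) (by omega), sum_range_succ',
      sum_range_succ', sum_congr rfl fun l _ ↦ neg_one_pow_mul_choose_mul_pow_rec n l (2 * X),
      sum_sub_distrib, ← mul_sum]
    simp only [pow_zero, Nat.sub_zero, Nat.choose_zero_right, mul_zero]
    ring

lemma two_mul_choose_succ_sub_choose {K : Type*} [Field K] [CharZero K] (m l : ℕ) :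
    2 * ((m + 1).choose l : K) - m.choose l = (m + 1 + l) / (m + 1) * (m + 1).choose l := by
  have hm : (m : K) + 1 ≠ 0 := m.cast_add_one_ne_zero
  cases l with
  | zero =>
    simp only [Nat.choose_zero_right, Nat.cast_one, Nat.cast_zero, add_zero, div_self hm]
    norm_num
  | succ k =>
    have pascal : ((m + 1).choose (k + 1) : K) = m.choose k + m.choose (k + 1) :=
      mod_cast Nat.choose_succ_succ' m k
    have absorption : ((m : K) + 1) * m.choose k = (m + 1).choose (k + 1) * (k + 1) :=
      mod_cast Nat.add_one_mul_choose_eq m k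
    field_simp
    push_cast
    linear_combination (m + 1) * pascal + absorption

theorem f_n_one_eq_one_general {K : Type*} [Field K] [CharZero K] (n : ℕ) (hn : 1 ≤ n) (x : K) :
    ∑ l ∈ range (n / 2 + 1),
      (-1 : K) ^ l * ((n : K) / (2 * ((n : K) - l))) * ((n - l).choose l) *
        (2 * x) ^ (n - 2 * l)
      = (T K n).eval x := by
  obtain ⟨n, rfl⟩ := Nat.exists_eq_add_of_le' hn
  have T_eq : T K (n + 1 : ℕ) = U K (n + 1 : ℕ) - X * U K n := by
    simpa using T_eq_U_sub_X_mul_U K (n + 1)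
  rw [T_eq, chebyshev_U_eq_sum K n (N := (n + 1) / 2 + 1) (by omega),
    chebyshev_U_eq_sum K (n + 1) (N := (n + 1) / 2 + 1) (by omega), mul_sum, ← sum_sub_distrib,
    eval_finsetSum]
  refine sum_congr rfl fun l hl ↦ ?_
  have hln : l ≤ n := by have := mem_range.1 hl; omega
  have coeff_eq : 2 * ((n + 1 - l).choose l : K) - (n - l).choose l =
      ((n + 1 : ℕ) : K) / ((n + 1 : ℕ) - l) * (n + 1 - l).choose l := by
    have cast_sub : ((n - l : ℕ) : K) = n - l := Nat.cast_sub hln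
    rw [Nat.sub_add_comm hln, two_mul_choose_succ_sub_choose, cast_sub]
    push_cast
    ring_nf
  have shift := choose_sub_mul_pow_succ n l (2 * x)
  simp only [eval_sub, eval_mul, eval_pow, eval_neg, eval_one, eval_natCast, eval_X, eval_ofNat]
  rw [mul_comm (2 : K) (_ - _), ← div_div]
  linear_combination (-1) ^ l / 2 * (-shift - (2 * x) ^ (n + 1 - 2 * l) * coeff_eq)

theorem f_n_one_eq_one (n : ℕ) (hn : 1 ≤ n) :
    ∑ l ∈ Finset.range (n / 2 + 1),
      (-1 : ℝ) ^ l * ((n : ℝ) / (2 * ((n : ℝ) - l))) * ((n - l).choose l) *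
        2 ^ (n - 2 * l)
      = 1 := by
  simpa only [mul_one, T_eval_one] using f_n_one_eq_one_general n hn (1 : ℝ)
end

section
/- For every integer n ≥ 1, (1/2) · Σ_{l=0}^{⌊n/2⌋} (-1)^l · C(n-l-1, l) · 2^{n-2l} = n. -/
open Finset

/-!
The numbers `∑ C(i, j) a ^ (i - j) b ^ j`, summed over `i + j = n`, satisfy the recurrence
`u (n + 2) = a * u (n + 1) + b * u n` by Pascal's rule. For `a = 2 * X` and `b = -1` this is the
recurrence of the Chebyshev polynomials `U` of the second kind, so the sum in the theorem is
`2 * U (n - 1)` evaluated at `1`, and `U (n - 1)` takes the value `n` there.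
-/

open Polynomial Polynomial.Chebyshev

-- For `n < k` the subtraction truncates, but then the binomial coefficient vanishes.
theorem choose_mul_pow_succ_sub {R : Type*} [CommSemiring R] (a : R) (n k : ℕ) :
    (n.choose k : R) * a ^ (n + 1 - k) = a * (n.choose k * a ^ (n - k)) := by
  rcases le_or_gt k n with hk | hk
  · rw [Nat.succ_sub hk, pow_succ]
    ring
  · simp [Nat.choose_eq_zero_of_lt hk]

theorem sum_antidiagonal_choose_mul_pow_add_two {R : Type*} [CommSemiring R] (a b : R) (n : ℕ) :
    ∑ p ∈ antidiagonal (n + 2), (p.1.choose p.2 : R) * a ^ (p.1 - p.2) * b ^ p.2 =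
      a * ∑ p ∈ antidiagonal (n + 1), (p.1.choose p.2 : R) * a ^ (p.1 - p.2) * b ^ p.2 +
        b * ∑ p ∈ antidiagonal n, (p.1.choose p.2 : R) * a ^ (p.1 - p.2) * b ^ p.2 := by
  have pascal (i j : ℕ) :
      ((i + 1).choose (j + 1) : R) * a ^ (i + 1 - (j + 1)) * b ^ (j + 1) =
        a * (i.choose (j + 1) * a ^ (i - (j + 1)) * b ^ (j + 1)) +
          b * (i.choose j * a ^ (i - j) * b ^ j) := by
    have absorb := choose_mul_pow_succ_sub a i (j + 1)
    rw [Nat.add_sub_add_right] at absorb ⊢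
    calc ((i + 1).choose (j + 1) : R) * a ^ (i - j) * b ^ (j + 1)
      _ = i.choose (j + 1) * a ^ (i - j) * b ^ (j + 1) +
          b * (i.choose j * a ^ (i - j) * b ^ j) := by
        rw [Nat.choose_succ_succ]
        push_cast
        ring
      _ = _ := by
        rw [absorb]
        ring
  rw [Finset.Nat.sum_antidiagonal_succ', Finset.Nat.sum_antidiagonal_succ,
    Finset.Nat.sum_antidiagonal_succ' (n := n)]
  simp only [pascal, sum_add_distrib, ← mul_sum]
  simp only [Nat.choose_zero_right, Nat.choose_zero_succ, Nat.cast_one, Nat.cast_zero, tsub_zero,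
    pow_zero, one_mul, mul_one, zero_mul, zero_add]
  ring

theorem sum_antidiagonal_eq_sum_range_of_lt {M : Type*} [AddCommMonoid M] {f : ℕ × ℕ → M}
    (hf : ∀ i j, i < j → f (i, j) = 0) {n k : ℕ} (hk : n < 2 * k) :
    ∑ p ∈ antidiagonal n, f p = ∑ l ∈ range k, f (n - l, l) := by
  have vanish (l : ℕ) (hl : n / 2 + 1 ≤ l) : f (n - l, l) = 0 := hf _ _ (by omega)
  rw [← Finset.Nat.sum_antidiagonal_swap, Finset.Nat.sum_antidiagonal_eq_sum_range_succ_mk]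
  exact (eventually_constant_sum vanish (by omega)).trans
    (eventually_constant_sum vanish (by omega)).symm

theorem chebyshevU_eq_sum_antidiagonal (R : Type*) [CommRing R] (n : ℕ) :
    U R n = ∑ p ∈ antidiagonal n,
      (p.1.choose p.2 : R[X]) * (2 * X) ^ (p.1 - p.2) * (-1) ^ p.2 := by
  induction n using Nat.twoStepInduction with
  | zero => simp
  | one => simp [Finset.Nat.antidiagonal_succ]
  | more n ih ih' =>
    rw [sum_antidiagonal_choose_mul_pow_add_two, ← ih, ← ih']
    push_cast
    rw [U_add_two]
    ring

theorem chebyshevU_eq_sum_range (R : Type*) [CommRing R] {n k : ℕ} (hk : n < 2 * k) :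
    U R n = ∑ l ∈ range k, (-1) ^ l * ((n - l).choose l : R[X]) * (2 * X) ^ (n - 2 * l) := by
  rw [chebyshevU_eq_sum_antidiagonal, sum_antidiagonal_eq_sum_range_of_lt _ hk]
  · refine sum_congr rfl fun l _ ↦ ?_
    rw [Nat.sub_sub, ← two_mul]
    ring
  · intro i j hij
    simp [Nat.choose_eq_zero_of_lt hij]

theorem sum_range_choose_mul_two_pow (R : Type*) [CommRing R] {n k : ℕ} (hk : n < 2 * k) :
    ∑ l ∈ range k, (-1) ^ l * ((n - l).choose l : R) * 2 ^ (n - 2 * l) = n + 1 := by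
  have h := congrArg (eval 1) (chebyshevU_eq_sum_range R hk)
  simpa [eval_finsetSum] using h.symm

theorem g_n_one_eq_n_general (R : Type*) [CommRing R] (n : ℕ) (hn : 1 ≤ n) :
    ∑ l ∈ range (n / 2 + 1), (-1) ^ l * ((n - l - 1).choose l : R) * 2 ^ (n - 2 * l) = 2 * n := by
  obtain ⟨m, rfl⟩ := Nat.exists_eq_add_of_le' hn
  rw [Nat.cast_succ, ← sum_range_choose_mul_two_pow R (k := (m + 1) / 2 + 1) (by omega), mul_sum]
  refine sum_congr rfl fun l _ ↦ ?_
  have absorb := choose_mul_pow_succ_sub (2 : R) (m - l) l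
  rw [show m - l + 1 - l = m + 1 - 2 * l by omega, show m - l - l = m - 2 * l by omega] at absorb
  rw [show m + 1 - l - 1 = m - l by omega, mul_assoc, absorb]
  ring

theorem g_n_one_eq_n (n : ℕ) (hn : 1 ≤ n) :
    (1 / 2 : ℝ) * ∑ l ∈ Finset.range (n / 2 + 1),
      (-1 : ℝ) ^ l * ((n - l - 1).choose l) * 2 ^ (n - 2 * l)
      = n := by
  rw [g_n_one_eq_n_general ℝ n hn]
  ring
end

section
/- Let h, a₁, a₂, b₁, b₂, c₁, c₂, d, e, f ∈ ℝ with h ≠ 0, c₁ > 0, c₂ = c₁, f = c₁, e = 2c₁, b₂ = b₁, d = -b₁, a₂ = a₁, and a₁ + 2/h² = b₁/√(h²c₁). If φ, ψ : ℤ → ℝ satisfy φ_n² + ψ_n² = 1/√(c₁h²) for all n ∈ ℤ, then φ and ψ solve the coupled discrete φ⁶ model: for all n ∈ ℤ, (1/h²)(φ_{n+1} + φ_{n-1} - 2φ_n) = a₁φ_n - b₁φ_n³ + dψ_n²φ_n + [c₁φ_n⁴ + eφ_n²ψ_n² + fψ_n⁴]·(φ_{n+1} + φ_{n-1}) and (1/h²)(ψ_{n+1}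 + ψ_{n-1} - 2ψ_n) = a₂ψ_n - b₂ψ_n³ + dφ_n²ψ_n + [c₂ψ_n⁴ + (e/2)φ_n⁴ + 2fφ_n²ψ_n²]·(ψ_{n+1} + ψ_{n-1}). -/
/-!
Under the given couplings both equations depend on the partner field only through
`ρ = φ n ^ 2 + ψ n ^ 2`: for `u` either field and `s` the sum of its two neighbours, they read
`(1 / h ^ 2) * (s - 2 * u) = a₁ * u - b₁ * ρ * u + c₁ * ρ ^ 2 * s`. The amplitude
`ρ = 1 / √(c₁ * h ^ 2)` makes the coefficients of `s` agree, and the relation between `a₁` and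
`b₁` makes those of `u` agree, whatever `u` and `s` are.
-/

lemma stencil_eq_of_coeff_eq {R : Type*} [CommRing R] {k a b c ρ : R}
    (site_coeff : a + 2 * k = b * ρ) (neighbour_coeff : c * ρ ^ 2 = k) (u s : R) :
    k * (s - 2 * u) = a * u - b * ρ * u + c * ρ ^ 2 * s := by
  linear_combination (-u) * site_coeff - s * neighbour_coeff

lemma mul_one_div_sqrt_mul_sq {c t : ℝ} (hc : c ≠ 0) (hct : 0 ≤ c * t) :
    c * (1 / √(c * t)) ^ 2 = 1 / t := by
  rw [div_pow, one_pow, Real.sq_sqrt hct, mul_one_div, div_mul_cancel_left₀ hc, one_div]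

theorem coupled_discrete_phi6_solution
    (h a₁ a₂ b₁ b₂ c₁ c₂ d e f : ℝ) (hh : h ≠ 0) (hc₁ : 0 < c₁)
    (hc₂ : c₂ = c₁) (hf : f = c₁) (he : e = 2 * c₁)
    (hb₂ : b₂ = b₁) (hd : d = -b₁) (ha₂ : a₂ = a₁)
    (ha₁ : a₁ + 2 / h ^ 2 = b₁ / Real.sqrt (h ^ 2 * c₁))
    (φ ψ : ℤ → ℝ)
    (hconstr : ∀ n : ℤ, φ n ^ 2 + ψ n ^ 2 = 1 / Real.sqrt (c₁ * h ^ 2)) :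
    ∀ n : ℤ,
      (1 / h ^ 2) * (φ (n + 1) + φ (n - 1) - 2 * φ n)
        = a₁ * φ n - b₁ * φ n ^ 3 + d * ψ n ^ 2 * φ n
          + (c₁ * φ n ^ 4 + e * φ n ^ 2 * ψ n ^ 2 + f * ψ n ^ 4)
            * (φ (n + 1) + φ (n - 1)) ∧
      (1 / h ^ 2) * (ψ (n + 1) + ψ (n - 1) - 2 * ψ n)
        = a₂ * ψ n - b₂ * ψ n ^ 3 + d * φ n ^ 2 * ψ n
          + (c₂ * ψ n ^ 4 + (e / 2) * φ n ^ 4 + 2 * f * φ n ^ 2 * ψ n ^ 2)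
            * (ψ (n + 1) + ψ (n - 1)) := by
  intro n
  subst a₂ b₂ c₂ d e f
  have site_coeff : a₁ + 2 * (1 / h ^ 2) = b₁ * (φ n ^ 2 + ψ n ^ 2) := by
    rw [hconstr n, mul_one_div, mul_one_div, mul_comm c₁]
    exact ha₁
  have neighbour_coeff : c₁ * (φ n ^ 2 + ψ n ^ 2) ^ 2 = 1 / h ^ 2 := by
    rw [hconstr n]
    exact mul_one_div_sqrt_mul_sq hc₁.ne' (by positivity)
  have stencil_eq := stencil_eq_of_coeff_eq site_coeff neighbour_coeff
  constructor
  · rw [stencil_eq]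
    ring
  · rw [stencil_eq]
    ring
end
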